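/- Let r be a positive integer and let δ, φ, c, C be real numbers with 2r < δ, r/(1 − 2r/δ) < φ, 0 ≤ c < ∞, and 0 ≤ C < ∞. Then there exists a constant B < ∞, depending only on r, δ, φ, c, and C, such that for every probability space and every real-valued stochastic process (ξ_t)_{t ≥ 1} on it satisfying (a) E[ξ_t] = 0 for all t, (b) sup_t E|ξ_t|^δ ≤ C, and (c) the strong mixing coefficients of (ξ_t) satisfy α(h) ≤ c · h^{−φ} for every positive integer h, one has, for every positive integer T, E[ ( T^{−1/2} Σ_{t=1}^T ξ_t )^{2r} ] ≤ B. -/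

import Mathlib

open MeasureTheory

/-- The strong (α-)mixing coefficient of a real-valued process `ξ` at lag `h`:
`α(h) = sup_t sup { |P(A ∩ B) − P(A)P(B)| : A ∈ σ(ξ_s : s ≤ t), B ∈ σ(ξ_s : s ≥ t + h) }`. -/
noncomputable def alphaMix {Ω : Type*} [MeasurableSpace Ω] (μ : Measure Ω)
    (ξ : ℕ → Ω → ℝ) (h : ℕ) : ℝ :=
  sSup {x : ℝ | ∃ t : ℕ, ∃ A B : Set Ω,
    MeasurableSet[⨆ s ∈ Set.Iic t, MeasurableSpace.comap (ξ s) inferInstance] A ∧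
    MeasurableSet[⨆ s ∈ Set.Ici (t + h), MeasurableSpace.comap (ξ s) inferInstance] B ∧
    x = |(μ (A ∩ B)).toReal - (μ A).toReal * (μ B).toReal|}

/-!
Truncating two variables at level `1`, after rescaling them so that their moments match the mixing
coefficient, gives Davydov's inequality for the covariance of variables with finite moments. Split
each product `ξ (f 1) ⋯ ξ (f n)` at the largest gap `h` of the tuple of times `f`: up to a
covariance of order `(h + 1) ^ (-θ)` with `θ = φ * (1 - N / δ)`, its expectation factors into two
mixed moments of smaller order. All times of the tuple lie within `n * h` of each other, so only
`O(T * (h + 1) ^ (n - 2))` tuples before `T` have largest gap `h`, and the covariances add up to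
`O(T ^ (n / 2))` because `θ > N / 2` and `n ≤ N`. The products of smaller mixed moments are of the
same order by induction, which starts at `n = 1`, where the moments vanish.
-/

open Finset ProbabilityTheory

section LargestGap

variable {ι : Type*}

lemma exists_adjacent_values [Finite ι] (f : ι → ℕ) {t : ℕ} (hle : ∃ k, f k ≤ t)
    (hlt : ∃ k, t < f k) :
    ∃ i j, f i ≤ t ∧ t < f j ∧ ∀ k, f k ≤ f i ∨ f j ≤ f k := by
  obtain ⟨i, hi, hmax⟩ := Set.exists_max_image {k | f k ≤ t} f (Set.toFinite _) hle
  obtain ⟨j, hj, hmin⟩ := Set.exists_min_image {k | t < f k} f (Set.toFinite _) hlt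
  exact ⟨i, j, hi, hj, fun k => (le_or_gt (f k) t).imp (hmax k) (hmin k)⟩

variable [Fintype ι]

lemma le_add_card_mul_of_adjacent_le (f : ι → ℕ) {g : ℕ}
    (hg : ∀ i j, f i < f j → (∀ k, f k ≤ f i ∨ f j ≤ f k) → f j ≤ f i + g) (k l : ι) :
    f k ≤ f l + Fintype.card ι * g := by
  have hcover : Ico (f l) (f k) ⊆ univ.biUnion fun i => Ico (f i) (f i + g) := by
    intro t ht
    rw [mem_Ico] at ht
    obtain ⟨i, j, hi, hj, hadj⟩ := exists_adjacent_values f ⟨l, ht.1⟩ ⟨k, ht.2⟩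
    have hgap := hg i j (hi.trans_lt hj) hadj
    exact mem_biUnion.2 ⟨i, mem_univ i, mem_Ico.2 ⟨hi, hj.trans_le hgap⟩⟩
  have hcard := (card_le_card hcover).trans card_biUnion_le
  simp only [Nat.card_Ico, add_tsub_cancel_left, sum_const, card_univ, smul_eq_mul] at hcard
  omega

lemma exists_split_at_largest_gap [Nontrivial ι] (f : ι → ℕ) :
    ∃ (s : Finset ι) (i j : ι), i ∈ s ∧ j ∉ s ∧ f i ≤ f j ∧ (∀ k ∈ s, f k ≤ f i) ∧
      (∀ k ∉ s, f j ≤ f k) ∧ ∀ k l, f k ≤ f l + Fintype.card ι * (f j - f i) := by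
  set P : Set (ι × ι) := {x | f x.1 < f x.2 ∧ ∀ k, f k ≤ f x.1 ∨ f x.2 ≤ f k}
  rcases P.eq_empty_or_nonempty with hempty | hne
  · have hconst : ∀ k l, f k ≤ f l := by
      simpa using le_add_card_mul_of_adjacent_le f (g := 0) fun i j hlt hadj =>
        absurd (show (i, j) ∈ P from ⟨hlt, hadj⟩) (hempty ▸ Set.notMem_empty _)
    obtain ⟨i, j, hij⟩ := exists_pair_ne ι
    exact ⟨{i}, i, j, mem_singleton_self i, by simpa using hij.symm, hconst i j,
      fun k _ => hconst k i, fun k _ => hconst j k, fun k l => (hconst k l).trans le_self_add⟩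
  · obtain ⟨⟨i, j⟩, ⟨hlt, hadj⟩, hmax⟩ :=
      Set.exists_max_image P (fun x => f x.2 - f x.1) (Set.toFinite _) hne
    refine ⟨({k | f k ≤ f i} : Finset ι), i, j, by simp, by simpa using hlt, hlt.le, by simp,
      ?_, ?_⟩
    · intro k hk
      exact (hadj k).resolve_left (by simpa using hk)
    · refine le_add_card_mul_of_adjacent_le f fun a b hab hadj' => ?_
      exact tsub_le_iff_left.1 (hmax (a, b) ⟨hab, hadj'⟩)

end LargestGap

section Counting

variable {ι : Type*} [Fintype ι] [DecidableEq ι]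

lemma card_pinned_piFinset_le {κ : Type*} [DecidableEq κ] (W : Finset κ) {i j : ι} (hij : i ≠ j)
    (x y : κ) :
    #{f ∈ Fintype.piFinset fun _ : ι => W | f i = x ∧ f j = y} ≤ #W ^ (Fintype.card ι - 2) := by
  have hcard : #(Fintype.piFinset fun _ : ↥({i, j}ᶜ : Finset ι) => W) =
      #W ^ (Fintype.card ι - 2) := by
    rw [Fintype.card_piFinset, prod_const, card_univ, Fintype.card_coe, card_compl, card_pair hij]
  rw [← hcard]
  refine card_le_card_of_injOn (fun f k => f k) (fun f hf => ?_) fun f hf g hg hfg => ?_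
  · simp only [coe_filter, Set.mem_ofPred_eq, Fintype.mem_piFinset] at hf
    exact Fintype.mem_piFinset.2 fun k => hf.1 k
  · simp only [coe_filter, Set.mem_ofPred_eq] at hf hg
    ext k
    by_cases hk : k ∈ ({i, j} : Finset ι)
    · rcases (by simpa using hk) with rfl | rfl
      · rw [hf.2.1, hg.2.1]
      · rw [hf.2.2, hg.2.2]
    · exact congr_fun hfg ⟨k, mem_compl.2 hk⟩

/-- The tuples of times before `T` whose total spread is at most `card ι` times the gap from the
`i`-th time up to the `j`-th. -/
def gapTuples (i j : ι) (T : ℕ) : Finset (ι → ℕ) :=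
  {f ∈ Fintype.piFinset fun _ => range T |
    f i ≤ f j ∧ ∀ k l, f k ≤ f l + Fintype.card ι * (f j - f i)}

lemma card_gapTuples_fiber_le {i j : ι} (hij : i ≠ j) (T x h : ℕ) :
    #{f ∈ gapTuples i j T | (f i, f j - f i) = (x, h)} ≤
      (2 * Fintype.card ι * h + 1) ^ (Fintype.card ι - 2) := by
  set W := Icc (x - Fintype.card ι * h) (x + Fintype.card ι * h) with hW
  have hcardW : #W ≤ 2 * Fintype.card ι * h + 1 := by
    rw [hW, Nat.card_Icc, mul_assoc]
    omega
  refine le_trans (card_le_card fun f hf => ?_)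
    ((card_pinned_piFinset_le W hij x (x + h)).trans (Nat.pow_le_pow_left hcardW _))
  simp only [gapTuples, mem_filter, Prod.mk.injEq] at hf
  obtain ⟨⟨-, hle, hspread⟩, rfl, rfl⟩ := hf
  refine mem_filter.2 ⟨Fintype.mem_piFinset.2 fun k => mem_Icc.2 ⟨?_, hspread k i⟩, rfl, ?_⟩
  · exact tsub_le_iff_right.2 (hspread i k)
  · omega

lemma sum_gapTuples_le {i j : ι} (hij : i ≠ j) (T : ℕ) {w : ℕ → ℝ} (hw : ∀ h, 0 ≤ w h) :
    ∑ f ∈ gapTuples i j T, w (f j - f i) ≤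
      T * ∑ h ∈ range T, (2 * Fintype.card ι * h + 1 : ℝ) ^ (Fintype.card ι - 2) * w h := by
  have hmaps : ∀ f ∈ gapTuples i j T, (f i, f j - f i) ∈ range T ×ˢ range T := by
    intro f hf
    simp only [gapTuples, mem_filter, Fintype.mem_piFinset, mem_range] at hf
    exact mem_product.2 ⟨mem_range.2 (hf.1 i), mem_range.2 ((Nat.sub_le _ _).trans_lt (hf.1 j))⟩
  have hfiber : ∀ x h, ∑ f ∈ gapTuples i j T with (f i, f j - f i) = (x, h), w (f j - f i) ≤
      (2 * Fintype.card ι * h + 1 : ℝ) ^ (Fintype.card ι - 2) * w h := by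
    intro x h
    calc ∑ f ∈ gapTuples i j T with (f i, f j - f i) = (x, h), w (f j - f i)
        = ∑ f ∈ gapTuples i j T with (f i, f j - f i) = (x, h), w h :=
          sum_congr rfl fun f hf => by rw [(Prod.mk.inj (mem_filter.1 hf).2).2]
      _ = #{f ∈ gapTuples i j T | (f i, f j - f i) = (x, h)} * w h := by
          rw [sum_const, nsmul_eq_mul]
      _ ≤ (2 * Fintype.card ι * h + 1 : ℝ) ^ (Fintype.card ι - 2) * w h := by
          gcongr
          · exact hw h
          · exact_mod_cast card_gapTuples_fiber_le hij T x h
  rw [← sum_fiberwise_of_maps_to hmaps, sum_product]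
  calc _ ≤ ∑ _x ∈ range T, ∑ h ∈ range T,
        (2 * Fintype.card ι * h + 1 : ℝ) ^ (Fintype.card ι - 2) * w h :=
      sum_le_sum fun x _ => sum_le_sum fun h _ => hfiber x h
    _ = _ := by rw [sum_const, card_range, nsmul_eq_mul]

lemma summable_add_one_rpow {s : ℝ} (hs : s < -1) : Summable fun h : ℕ => ((h : ℝ) + 1) ^ s := by
  simpa using (summable_nat_add_iff 1).2 (Real.summable_nat_rpow.2 hs)

lemma two_mul_mul_add_one_pow_mul_rpow_le {n h T : ℕ} (hn : 2 ≤ n) (hh : h < T) {R θ : ℝ}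
    (hR : n ≤ R) :
    (2 * n * h + 1 : ℝ) ^ (n - 2) * ((h : ℝ) + 1) ^ (-θ) ≤
      (2 * n : ℝ) ^ (n - 2) * (T : ℝ) ^ ((n : ℝ) / 2 - 1) * ((h : ℝ) + 1) ^ (R / 2 - 1 - θ) := by
  have hn' : (2 : ℝ) ≤ n := by exact_mod_cast hn
  have hT : (h : ℝ) + 1 ≤ T := by exact_mod_cast hh
  have hpos : (0 : ℝ) < (h : ℝ) + 1 := by positivity
  calc (2 * n * h + 1 : ℝ) ^ (n - 2) * ((h : ℝ) + 1) ^ (-θ)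
      ≤ (2 * n * ((h : ℝ) + 1)) ^ (n - 2) * ((h : ℝ) + 1) ^ (-θ) := by gcongr; linarith
    _ = (2 * n : ℝ) ^ (n - 2) * ((h : ℝ) + 1) ^ ((n : ℝ) / 2 - 1) *
          ((h : ℝ) + 1) ^ ((n : ℝ) / 2 - 1 - θ) := by
        rw [mul_pow, ← Real.rpow_natCast ((h : ℝ) + 1), mul_assoc, mul_assoc,
          ← Real.rpow_add hpos, ← Real.rpow_add hpos, Nat.cast_sub hn]
        congr 2
        push_cast
        ring
    _ ≤ _ := by
        gcongr
        · linarith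
        · linarith

lemma sum_gapTuples_rpow_le {i j : ι} (hij : i ≠ j) (T : ℕ) {R θ : ℝ}
    (hR : Fintype.card ι ≤ R) (hθ : R / 2 < θ) :
    ∑ f ∈ gapTuples i j T, ((f j - f i : ℕ) + 1 : ℝ) ^ (-θ) ≤
      (2 * Fintype.card ι : ℝ) ^ (Fintype.card ι - 2) *
        (∑' h : ℕ, ((h : ℝ) + 1) ^ (R / 2 - 1 - θ)) * (T : ℝ) ^ ((Fintype.card ι : ℝ) / 2) := by
  set n := Fintype.card ι
  have hn : 2 ≤ n := Fintype.one_lt_card_iff.2 ⟨i, j, hij⟩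
  set u : ℕ → ℝ := fun h => ((h : ℝ) + 1) ^ (R / 2 - 1 - θ)
  have hTpow : (T : ℝ) * (T : ℝ) ^ ((n : ℝ) / 2 - 1) = (T : ℝ) ^ ((n : ℝ) / 2) := by
    rw [← Real.rpow_one_add' (Nat.cast_nonneg T) (by rw [add_sub_cancel]; positivity),
      add_sub_cancel]
  calc ∑ f ∈ gapTuples i j T, ((f j - f i : ℕ) + 1 : ℝ) ^ (-θ)
      ≤ T * ∑ h ∈ range T, (2 * n * h + 1 : ℝ) ^ (n - 2) * ((h : ℝ) + 1) ^ (-θ) :=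
        sum_gapTuples_le hij T (w := fun h => ((h : ℝ) + 1) ^ (-θ)) fun h => by positivity
    _ ≤ T * ∑ h ∈ range T, (2 * n : ℝ) ^ (n - 2) * (T : ℝ) ^ ((n : ℝ) / 2 - 1) * u h := by
        refine mul_le_mul_of_nonneg_left (sum_le_sum fun h hh => ?_) (Nat.cast_nonneg T)
        exact two_mul_mul_add_one_pow_mul_rpow_le hn (mem_range.1 hh) hR
    _ = (2 * n : ℝ) ^ (n - 2) * (∑ h ∈ range T, u h) * (T : ℝ) ^ ((n : ℝ) / 2) := by
        rw [← mul_sum, ← hTpow]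
        ring
    _ ≤ _ := by
        gcongr
        exact (summable_add_one_rpow (by linarith)).sum_le_tsum _ fun h _ => by positivity

end Counting

section StrongMixing

variable {Ω : Type*} {m m₁ m₂ m0 : MeasurableSpace Ω} {μ : Measure Ω}

/-- The strong mixing coefficient of the σ-algebras `m₁` and `m₂` under `μ` is at most `a`. -/
def AlphaMixingLE (μ : Measure Ω) (m₁ m₂ : MeasurableSpace Ω) (a : ℝ) : Prop :=
  ∀ ⦃A B : Set Ω⦄, MeasurableSet[m₁] A → MeasurableSet[m₂] B →
    |μ.real (A ∩ B) - μ.real A * μ.real B| ≤ a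

lemma integral_abs_condExp_le_two_mul (hm : m ≤ m0) [SigmaFinite (μ.trim hm)] {Y : Ω → ℝ}
    (hY : Integrable Y μ) {κ : ℝ} (hκ : ∀ S, MeasurableSet[m] S → |∫ ω in S, Y ω ∂μ| ≤ κ) :
    ∫ ω, |μ[Y | m] ω| ∂μ ≤ 2 * κ := by
  set S := {ω | 0 ≤ μ[Y | m] ω}
  have hS : MeasurableSet[m] S :=
    measurableSet_le measurable_const stronglyMeasurable_condExp.measurable
  have hpos : ∫ ω in S, |μ[Y | m] ω| ∂μ = ∫ ω in S, Y ω ∂μ := by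
    rw [← setIntegral_condExp hm hY hS]
    exact setIntegral_congr_fun (hm _ hS) fun ω hω => abs_of_nonneg hω
  have hneg : ∫ ω in Sᶜ, |μ[Y | m] ω| ∂μ = -∫ ω in Sᶜ, Y ω ∂μ := by
    rw [← setIntegral_condExp hm hY hS.compl, ← integral_neg]
    exact setIntegral_congr_fun (hm _ hS).compl fun ω hω => abs_of_neg (not_le.1 hω)
  rw [← integral_add_compl (hm _ hS) integrable_condExp.abs, hpos, hneg]
  linarith [(abs_le.1 (hκ S hS)).2, (abs_le.1 (hκ Sᶜ hS.compl)).1]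

lemma abs_integral_mul_le_of_setIntegral_le (hm : m ≤ m0) [IsProbabilityMeasure μ] {X Y : Ω → ℝ}
    (hX : Measurable[m] X) {M : ℝ} (hXM : ∀ᵐ ω ∂μ, |X ω| ≤ M) (hY : Integrable Y μ) {κ : ℝ}
    (hκ : ∀ S, MeasurableSet[m] S → |∫ ω in S, Y ω ∂μ| ≤ κ) :
    |∫ ω, X ω * Y ω ∂μ| ≤ 2 * M * κ := by
  obtain ⟨ω₀, hω₀⟩ := hXM.exists
  have hM : 0 ≤ M := (abs_nonneg _).trans hω₀
  have hXY : Integrable (fun ω => X ω * Y ω) μ :=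
    hY.bdd_mul (hX.mono hm le_rfl).aestronglyMeasurable hXM
  have hcond : ∫ ω, X ω * Y ω ∂μ = ∫ ω, X ω * μ[Y | m] ω ∂μ := by
    rw [← integral_condExp hm (f := fun ω => X ω * Y ω)]
    exact integral_congr_ae (condExp_mul_of_stronglyMeasurable_left hX.stronglyMeasurable hXY hY)
  calc |∫ ω, X ω * Y ω ∂μ| ≤ ∫ ω, |X ω * μ[Y | m] ω| ∂μ := hcond ▸ abs_integral_le_integral_abs
    _ ≤ ∫ ω, M * |μ[Y | m] ω| ∂μ := by
        refine integral_mono_of_nonneg (.of_forall fun _ => abs_nonneg _)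
          (integrable_condExp.abs.const_mul M) ?_
        filter_upwards [hXM] with ω hω
        rw [abs_mul]
        gcongr
    _ = M * ∫ ω, |μ[Y | m] ω| ∂μ := integral_const_mul _ _
    _ ≤ M * (2 * κ) := by gcongr; exact integral_abs_condExp_le_two_mul hm hY hκ
    _ = 2 * M * κ := by ring

lemma AlphaMixingLE.abs_setIntegral_sub_integral_le [IsProbabilityMeasure μ] {a : ℝ}
    (hmix : AlphaMixingLE μ m₁ m₂ a) (h₁ : m₁ ≤ m0) (h₂ : m₂ ≤ m0) {Y : Ω → ℝ}
    (hY : Measurable[m₂] Y) {N : ℝ} (hYN : ∀ᵐ ω ∂μ, |Y ω| ≤ N) {S : Set Ω}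
    (hS : MeasurableSet[m₁] S) :
    |∫ ω in S, (Y ω - ∫ ω', Y ω' ∂μ) ∂μ| ≤ 2 * N * a := by
  have hS' : MeasurableSet[m0] S := h₁ _ hS
  have hYi : Integrable Y μ := .of_bound (hY.mono h₂ le_rfl).aestronglyMeasurable N hYN
  have hind : Integrable (S.indicator (1 : Ω → ℝ)) μ := (integrable_const 1).indicator hS'
  have hYind : (fun ω => Y ω * S.indicator (1 : Ω → ℝ) ω) = S.indicator Y := by
    ext ω
    by_cases hω : ω ∈ S <;> simp [hω]
  have hswap : ∫ ω in S, (Y ω - ∫ ω', Y ω' ∂μ) ∂μ =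
      ∫ ω, Y ω * (S.indicator (1 : Ω → ℝ) ω - μ.real S) ∂μ := by
    simp only [mul_sub]
    rw [integral_sub (hYind ▸ hYi.indicator hS') (hYi.mul_const _), hYind,
      integral_indicator hS', integral_sub hYi.integrableOn (integrable_const _),
      integral_mul_const, setIntegral_const, smul_eq_mul, mul_comm (μ.real S)]
  rw [hswap]
  refine abs_integral_mul_le_of_setIntegral_le (Y := fun ω => S.indicator 1 ω - μ.real S) h₂ hY
    hYN (hind.sub (integrable_const _)) fun U hU => ?_
  rw [integral_sub hind.integrableOn (integrable_const _), integral_indicator_one hS',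
    measureReal_restrict_apply hS', setIntegral_const, smul_eq_mul, mul_comm (μ.real U)]
  exact hmix hS hU

theorem AlphaMixingLE.abs_integral_mul_sub_le_of_bounded [IsProbabilityMeasure μ] {a : ℝ}
    (hmix : AlphaMixingLE μ m₁ m₂ a) (h₁ : m₁ ≤ m0) (h₂ : m₂ ≤ m0) {X Y : Ω → ℝ}
    (hX : Measurable[m₁] X) (hY : Measurable[m₂] Y) {M N : ℝ} (hXM : ∀ᵐ ω ∂μ, |X ω| ≤ M)
    (hYN : ∀ᵐ ω ∂μ, |Y ω| ≤ N) :
    |∫ ω, X ω * Y ω ∂μ - (∫ ω, X ω ∂μ) * ∫ ω, Y ω ∂μ| ≤ 4 * M * N * a := by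
  have hX' : AEStronglyMeasurable X μ := (hX.mono h₁ le_rfl).aestronglyMeasurable
  have hXi : Integrable X μ := .of_bound hX' M hXM
  have hYi : Integrable Y μ := .of_bound (hY.mono h₂ le_rfl).aestronglyMeasurable N hYN
  calc |∫ ω, X ω * Y ω ∂μ - (∫ ω, X ω ∂μ) * ∫ ω, Y ω ∂μ|
      = |∫ ω, X ω * (Y ω - ∫ ω', Y ω' ∂μ) ∂μ| := by
        simp only [mul_sub]
        rw [integral_sub (hYi.bdd_mul hX' hXM) (hXi.mul_const _), integral_mul_const]
    _ ≤ 2 * M * (2 * N * a) :=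
        abs_integral_mul_le_of_setIntegral_le h₁ hX hXM (hYi.sub (integrable_const _))
          fun S hS => hmix.abs_setIntegral_sub_integral_le h₁ h₂ hY hYN hS
    _ = 4 * M * N * a := by ring

end StrongMixing

section Moments

variable {Ω : Type*} {m0 : MeasurableSpace Ω} {μ : Measure Ω}

/-- The absolute moment of `X` of order `p` is finite and at most `A`; integrability is part of the
notion because the Bochner integral of a non-integrable function is `0`. -/
structure AbsMomentLE (μ : Measure Ω) (X : Ω → ℝ) (p A : ℝ) : Prop where
  integrable_rpow : Integrable (fun ω => |X ω| ^ p) μ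
  integral_rpow_le : ∫ ω, |X ω| ^ p ∂μ ≤ A

lemma AbsMomentLE.nonneg {X : Ω → ℝ} {p A : ℝ} (h : AbsMomentLE μ X p A) : 0 ≤ A :=
  (integral_nonneg fun _ => by positivity).trans h.integral_rpow_le

lemma AbsMomentLE.of_lintegral_le {X : Ω → ℝ} (hX : Measurable X) {p A : ℝ} (hA : 0 ≤ A)
    (h : ∫⁻ ω, ENNReal.ofReal (|X ω| ^ p) ∂μ ≤ ENNReal.ofReal A) : AbsMomentLE μ X p A := by
  have hnonneg : 0 ≤ᵐ[μ] fun ω => |X ω| ^ p := .of_forall fun _ => by positivity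
  have hint : Integrable (fun ω => |X ω| ^ p) μ :=
    ⟨(hX.abs.pow_const p).aestronglyMeasurable,
      (hasFiniteIntegral_iff_ofReal hnonneg).2 (h.trans_lt ENNReal.ofReal_lt_top)⟩
  refine ⟨hint, (ENNReal.ofReal_le_ofReal_iff hA).1 ?_⟩
  rwa [ofReal_integral_eq_lintegral_ofReal hint hnonneg]

lemma AbsMomentLE.const_mul {X : Ω → ℝ} {p A : ℝ} (h : AbsMomentLE μ X p A) (b : ℝ) :
    AbsMomentLE μ (fun ω => b * X ω) p (|b| ^ p * A) := by
  have hpow : (fun ω => |b * X ω| ^ p) = fun ω => |b| ^ p * |X ω| ^ p := by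
    ext ω
    rw [abs_mul, Real.mul_rpow (abs_nonneg b) (abs_nonneg _)]
  refine ⟨hpow ▸ h.integrable_rpow.const_mul _, ?_⟩
  rw [hpow, integral_const_mul]
  gcongr
  exact h.integral_rpow_le

lemma abs_prod_rpow_div_card_le {ι : Type*} [Fintype ι] [Nonempty ι] (x : ι → ℝ) (p : ℝ) :
    |∏ k, x k| ^ (p / Fintype.card ι) ≤ (Fintype.card ι : ℝ)⁻¹ * ∑ k, |x k| ^ p := by
  calc |∏ k, x k| ^ (p / Fintype.card ι) = ∏ k, (|x k| ^ p) ^ (Fintype.card ι : ℝ)⁻¹ := by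
        rw [abs_prod, ← Real.finsetProd_rpow _ _ fun k _ => abs_nonneg (x k)]
        simp only [← Real.rpow_mul (abs_nonneg _), div_eq_mul_inv]
    _ ≤ ∑ k, (Fintype.card ι : ℝ)⁻¹ * |x k| ^ p :=
        Real.geom_mean_le_arith_mean_weighted _ _ _ (fun _ _ => by positivity) (by simp)
          fun _ _ => by positivity
    _ = (Fintype.card ι : ℝ)⁻¹ * ∑ k, |x k| ^ p := (mul_sum _ _ _).symm

lemma AbsMomentLE.prod {ι : Type*} [Fintype ι] [Nonempty ι] {X : ι → Ω → ℝ}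
    (hX : ∀ k, Measurable (X k)) {p A : ℝ} (h : ∀ k, AbsMomentLE μ (X k) p A) :
    AbsMomentLE μ (fun ω => ∏ k, X k ω) (p / Fintype.card ι) A := by
  have hsum : Integrable (fun ω => ∑ k, |X k ω| ^ p) μ :=
    integrable_finsetSum _ fun k _ => (h k).integrable_rpow
  have hint : Integrable (fun ω => |∏ k, X k ω| ^ (p / Fintype.card ι)) μ := by
    refine (hsum.const_mul (Fintype.card ι : ℝ)⁻¹).mono'
      ((Finset.measurable_prod _ fun k _ => hX k).abs.pow_const _).aestronglyMeasurable
      (.of_forall fun ω => ?_)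
    rw [Real.norm_of_nonneg (by positivity)]
    exact abs_prod_rpow_div_card_le _ _
  refine ⟨hint, ?_⟩
  calc ∫ ω, |∏ k, X k ω| ^ (p / Fintype.card ι) ∂μ
      ≤ ∫ ω, (Fintype.card ι : ℝ)⁻¹ * ∑ k, |X k ω| ^ p ∂μ :=
        integral_mono hint (hsum.const_mul _) fun ω => abs_prod_rpow_div_card_le _ _
    _ = (Fintype.card ι : ℝ)⁻¹ * ∑ k, ∫ ω, |X k ω| ^ p ∂μ := by
        rw [integral_const_mul, integral_finsetSum _ fun k _ => (h k).integrable_rpow]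
    _ ≤ (Fintype.card ι : ℝ)⁻¹ * ∑ _k : ι, A := by
        gcongr with k
        exact (h k).integral_rpow_le
    _ = A := by
        rw [sum_const, card_univ, nsmul_eq_mul, inv_mul_cancel_left₀ (by positivity)]

end Moments

section Truncation

lemma mul_le_rpow_add_rpow {u v p q : ℝ} (hu : 0 ≤ u) (hv : 0 ≤ v) (hp : 0 < p) (hq : 0 < q)
    (hpq : p⁻¹ + q⁻¹ ≤ 1) (huv : 1 ≤ u ∨ 1 ≤ v) : u * v ≤ u ^ p + v ^ q := by
  set w := max (u ^ p) (v ^ q)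
  have hw : 1 ≤ w := le_max_iff.2 <| huv.imp (Real.one_le_rpow · hp.le) (Real.one_le_rpow · hq.le)
  calc u * v = (u ^ p) ^ p⁻¹ * (v ^ q) ^ q⁻¹ := by
        rw [Real.rpow_rpow_inv hu hp.ne', Real.rpow_rpow_inv hv hq.ne']
    _ ≤ w ^ p⁻¹ * w ^ q⁻¹ := by
        gcongr
        · exact le_max_left _ _
        · exact le_max_right _ _
    _ = w ^ (p⁻¹ + q⁻¹) := (Real.rpow_add (by positivity) _ _).symm
    _ ≤ w := Real.rpow_le_self_of_one_le hw hpq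
    _ ≤ u ^ p + v ^ q := max_le_add_of_nonneg (by positivity) (by positivity)

variable {Ω : Type*} {X Y : Ω → ℝ}

lemma measurable_truncation {m : MeasurableSpace Ω} (hX : Measurable[m] X) (A : ℝ) :
    Measurable[m] (truncation X A) :=
  (measurable_id.indicator measurableSet_Ioc).comp hX

lemma truncation_eq_zero_or_self (X : Ω → ℝ) (A : ℝ) (ω : Ω) :
    truncation X A ω = 0 ∨ truncation X A ω = X ω :=
  Set.indicator_eq_zero_or_self _ _ _

lemma abs_sub_truncation_one_le_rpow {p : ℝ} (hp : 1 ≤ p) (ω : Ω) :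
    |X ω - truncation X 1 ω| ≤ |X ω| ^ p := by
  rcases lt_or_ge |X ω| 1 with hX | hX
  · rw [truncation_eq_self hX, sub_self, abs_zero]
    positivity
  · calc |X ω - truncation X 1 ω| ≤ |X ω| := by
          rcases truncation_eq_zero_or_self X 1 ω with h | h <;> simp [h]
      _ ≤ |X ω| ^ p := Real.self_le_rpow_of_one_le hX hp

lemma abs_mul_sub_truncation_one_mul_le_rpow {p q : ℝ} (hp : 0 < p) (hq : 0 < q)
    (hpq : p⁻¹ + q⁻¹ ≤ 1) (ω : Ω) :
    |X ω * Y ω - truncation X 1 ω * truncation Y 1 ω| ≤ |X ω| ^ p + |Y ω| ^ q := by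
  by_cases hlarge : 1 ≤ |X ω| ∨ 1 ≤ |Y ω|
  · calc |X ω * Y ω - truncation X 1 ω * truncation Y 1 ω| ≤ |X ω| * |Y ω| := by
          rcases truncation_eq_zero_or_self X 1 ω with hX | hX <;>
            rcases truncation_eq_zero_or_self Y 1 ω with hY | hY <;> simp [hX, hY, mul_nonneg]
      _ ≤ |X ω| ^ p + |Y ω| ^ q :=
          mul_le_rpow_add_rpow (abs_nonneg _) (abs_nonneg _) hp hq hpq hlarge
  · push Not at hlarge
    rw [truncation_eq_self hlarge.1, truncation_eq_self hlarge.2, sub_self, abs_zero]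
    positivity

variable {m0 : MeasurableSpace Ω} {μ : Measure Ω}

lemma integrable_of_abs_sub_le {F G D : Ω → ℝ} (hF : AEStronglyMeasurable F μ)
    (hG : Integrable G μ) (hD : Integrable D μ) (h : ∀ ω, |F ω - G ω| ≤ D ω) :
    Integrable F μ := by
  have hFG : Integrable (fun ω => F ω - G ω) μ :=
    hD.mono' (hF.sub hG.aestronglyMeasurable) (.of_forall h)
  exact (hFG.add hG).congr (.of_forall fun ω => sub_add_cancel (F ω) (G ω))

lemma abs_integral_sub_integral_le {F G D : Ω → ℝ} (hF : AEStronglyMeasurable F μ)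
    (hG : Integrable G μ) (hD : Integrable D μ) (h : ∀ ω, |F ω - G ω| ≤ D ω) :
    |∫ ω, F ω ∂μ - ∫ ω, G ω ∂μ| ≤ ∫ ω, D ω ∂μ := by
  have hFi := integrable_of_abs_sub_le hF hG hD h
  rw [← integral_sub hFi hG]
  exact abs_integral_le_integral_abs.trans (integral_mono (hFi.sub hG).abs hD h)

lemma abs_integral_truncation_one_le [IsProbabilityMeasure μ] :
    |∫ ω, truncation X 1 ω ∂μ| ≤ 1 := by
  simpa using norm_integral_le_of_norm_le_const (μ := μ) (f := truncation X 1) (C := 1)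
    (.of_forall fun ω => by simpa using abs_truncation_le_bound X 1 ω)

variable [IsProbabilityMeasure μ]

lemma AbsMomentLE.integrable {p A : ℝ} (h : AbsMomentLE μ X p A) (hX : Measurable X)
    (hp : 1 ≤ p) : Integrable X μ :=
  integrable_of_abs_sub_le hX.aestronglyMeasurable hX.aestronglyMeasurable.integrable_truncation
    h.integrable_rpow (abs_sub_truncation_one_le_rpow hp)

lemma AbsMomentLE.abs_integral_sub_integral_truncation_le {p A : ℝ} (h : AbsMomentLE μ X p A)
    (hX : Measurable X) (hp : 1 ≤ p) : |∫ ω, X ω ∂μ - ∫ ω, truncation X 1 ω ∂μ| ≤ A :=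
  (abs_integral_sub_integral_le hX.aestronglyMeasurable
    hX.aestronglyMeasurable.integrable_truncation h.integrable_rpow
    (abs_sub_truncation_one_le_rpow hp)).trans h.integral_rpow_le

lemma abs_integral_mul_sub_integral_truncation_mul_le {p q A B : ℝ} (hp : 0 < p) (hq : 0 < q)
    (hpq : p⁻¹ + q⁻¹ ≤ 1) (hX : Measurable X) (hY : Measurable Y) (hXA : AbsMomentLE μ X p A)
    (hYB : AbsMomentLE μ Y q B) :
    |∫ ω, X ω * Y ω ∂μ - ∫ ω, truncation X 1 ω * truncation Y 1 ω ∂μ| ≤ A + B := by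
  have htrunc : Integrable (fun ω => truncation X 1 ω * truncation Y 1 ω) μ :=
    hY.aestronglyMeasurable.integrable_truncation.bdd_mul hX.aestronglyMeasurable.truncation
      (.of_forall fun ω => abs_truncation_le_bound X 1 ω)
  calc _ ≤ ∫ ω, (|X ω| ^ p + |Y ω| ^ q) ∂μ :=
        abs_integral_sub_integral_le (hX.mul hY).aestronglyMeasurable htrunc
          (hXA.integrable_rpow.add hYB.integrable_rpow)
          (abs_mul_sub_truncation_one_mul_le_rpow hp hq hpq)
    _ = ∫ ω, |X ω| ^ p ∂μ + ∫ ω, |Y ω| ^ q ∂μ :=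
        integral_add hXA.integrable_rpow hYB.integrable_rpow
    _ ≤ A + B := add_le_add hXA.integral_rpow_le hYB.integral_rpow_le

end Truncation

section Davydov

variable {Ω : Type*} {m₁ m₂ m0 : MeasurableSpace Ω} {μ : Measure Ω} [IsProbabilityMeasure μ]

lemma abs_sub_mul_le_of_approx {e e' x x' y y' A B D E : ℝ} (hD : |e - e'| ≤ D)
    (hE : |e' - x' * y'| ≤ E) (hA : |x - x'| ≤ A) (hB : |y - y'| ≤ B) (hx' : |x'| ≤ 1)
    (hy' : |y'| ≤ 1) : |e - x * y| ≤ D + E + (A + B + A * B) := by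
  have hA0 : 0 ≤ A := (abs_nonneg _).trans hA
  have hmul : |x * y - x' * y'| ≤ A + B + A * B := by
    calc |x * y - x' * y'| = |(x - x') * y' + x' * (y - y') + (x - x') * (y - y')| := by ring_nf
      _ ≤ |x - x'| * |y'| + |x'| * |y - y'| + |x - x'| * |y - y'| := by
          simpa only [abs_mul] using abs_add_three ((x - x') * y') (x' * (y - y'))
            ((x - x') * (y - y'))
      _ ≤ A * 1 + 1 * B + A * B := by gcongr
      _ = A + B + A * B := by ring
  calc |e - x * y| = |(e - e') + (e' - x' * y') + -(x * y - x' * y')| := by ring_nf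
    _ ≤ |e - e'| + |e' - x' * y'| + |x * y - x' * y'| := by
        simpa only [abs_neg] using abs_add_three (e - e') (e' - x' * y') (-(x * y - x' * y'))
    _ ≤ D + E + (A + B + A * B) := by gcongr

lemma AlphaMixingLE.abs_integral_mul_sub_le_of_absMomentLE {a : ℝ}
    (hmix : AlphaMixingLE μ m₁ m₂ a) (h₁ : m₁ ≤ m0) (h₂ : m₂ ≤ m0) {X Y : Ω → ℝ}
    (hX : Measurable[m₁] X) (hY : Measurable[m₂] Y) {p q A B : ℝ} (hp : 0 < p) (hq : 0 < q)
    (hpq : p⁻¹ + q⁻¹ ≤ 1) (hXA : AbsMomentLE μ X p A) (hYB : AbsMomentLE μ Y q B) :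
    |∫ ω, X ω * Y ω ∂μ - (∫ ω, X ω ∂μ) * ∫ ω, Y ω ∂μ| ≤ A + B + 4 * a + (A + B + A * B) := by
  have hp1 : 1 ≤ p := (inv_le_one₀ hp).1 (by linarith [inv_pos.2 hq])
  have hq1 : 1 ≤ q := (inv_le_one₀ hq).1 (by linarith [inv_pos.2 hp])
  have hX0 : Measurable[m0] X := hX.mono h₁ le_rfl
  have hY0 : Measurable[m0] Y := hY.mono h₂ le_rfl
  have hbounded : |∫ ω, truncation X 1 ω * truncation Y 1 ω ∂μ -
      (∫ ω, truncation X 1 ω ∂μ) * ∫ ω, truncation Y 1 ω ∂μ| ≤ 4 * a := by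
    simpa using hmix.abs_integral_mul_sub_le_of_bounded h₁ h₂ (measurable_truncation hX 1)
      (measurable_truncation hY 1) (.of_forall (abs_truncation_le_bound X 1))
      (.of_forall (abs_truncation_le_bound Y 1))
  exact abs_sub_mul_le_of_approx
    (abs_integral_mul_sub_integral_truncation_mul_le hp hq hpq hX0 hY0 hXA hYB) hbounded
    (hXA.abs_integral_sub_integral_truncation_le hX0 hp1)
    (hYB.abs_integral_sub_integral_truncation_le hY0 hq1)
    abs_integral_truncation_one_le abs_integral_truncation_one_le

-- Rescaling by `a ^ p⁻¹` and `a ^ q⁻¹` makes both moments of order `a`, the size of the mixing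
-- coefficient.
theorem AlphaMixingLE.abs_integral_mul_sub_le_rpow {a : ℝ} (hmix : AlphaMixingLE μ m₁ m₂ a)
    (ha : 0 < a) (ha1 : a ≤ 1) (h₁ : m₁ ≤ m0) (h₂ : m₂ ≤ m0) {X Y : Ω → ℝ}
    (hX : Measurable[m₁] X) (hY : Measurable[m₂] Y) {p q A B : ℝ} (hp : 0 < p) (hq : 0 < q)
    (hpq : p⁻¹ + q⁻¹ ≤ 1) (hXA : AbsMomentLE μ X p A) (hYB : AbsMomentLE μ Y q B) :
    |∫ ω, X ω * Y ω ∂μ - (∫ ω, X ω ∂μ) * ∫ ω, Y ω ∂μ| ≤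
      (2 + A) * (2 + B) * a ^ (1 - (p⁻¹ + q⁻¹)) := by
  have hA := hXA.nonneg
  have hB := hYB.nonneg
  have hpow : ∀ {s : ℝ}, 0 < s → |a ^ s⁻¹| ^ s = a := fun hs => by
    rw [abs_of_nonneg (by positivity), Real.rpow_inv_rpow ha.le hs.ne']
  have hscaled := hmix.abs_integral_mul_sub_le_of_absMomentLE h₁ h₂ (hX.const_mul (a ^ p⁻¹))
    (hY.const_mul (a ^ q⁻¹)) hp hq hpq (hXA.const_mul _) (hYB.const_mul _)
  have hcov : ∫ ω, a ^ p⁻¹ * X ω * (a ^ q⁻¹ * Y ω) ∂μ -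
      (∫ ω, a ^ p⁻¹ * X ω ∂μ) * ∫ ω, a ^ q⁻¹ * Y ω ∂μ =
        a ^ (p⁻¹ + q⁻¹) * (∫ ω, X ω * Y ω ∂μ - (∫ ω, X ω ∂μ) * ∫ ω, Y ω ∂μ) := by
    simp only [mul_mul_mul_comm _ (X _), integral_const_mul]
    rw [Real.rpow_add ha]
    ring
  rw [hcov, abs_mul, abs_of_pos (by positivity), hpow hp, hpow hq] at hscaled
  rw [Real.rpow_sub ha, Real.rpow_one, ← mul_div_assoc, le_div_iff₀' (by positivity)]
  refine hscaled.trans ?_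
  have : a * A * (a * B) ≤ A * B * a := by
    calc a * A * (a * B) = A * B * a * a := by ring
      _ ≤ A * B * a := mul_le_of_le_one_right (by positivity) ha1
  linarith

end Davydov

section AlphaMixCoefficient

variable {Ω : Type*} {m0 : MeasurableSpace Ω} {μ : Measure Ω} {ξ : ℕ → Ω → ℝ}

/-- The σ-algebra generated by the variables `ξ s` with `s ∈ I`. -/
abbrev sigmaOf (ξ : ℕ → Ω → ℝ) (I : Set ℕ) : MeasurableSpace Ω :=
  ⨆ s ∈ I, MeasurableSpace.comap (ξ s) inferInstance

lemma sigmaOf_le (hξ : ∀ t, Measurable (ξ t)) (I : Set ℕ) : sigmaOf ξ I ≤ m0 :=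
  iSup₂_le fun s _ => (hξ s).comap_le

lemma measurable_sigmaOf {I : Set ℕ} {t : ℕ} (ht : t ∈ I) : Measurable[sigmaOf ξ I] (ξ t) :=
  Measurable.of_comap_le (le_iSup₂_of_le t ht le_rfl)

lemma AlphaMixingLE.mono {m₁ m₂ : MeasurableSpace Ω} {a b : ℝ} (h : AlphaMixingLE μ m₁ m₂ a)
    (hab : a ≤ b) : AlphaMixingLE μ m₁ m₂ b :=
  fun _ _ hA hB => (h hA hB).trans hab

variable [IsProbabilityMeasure μ]

lemma abs_measureReal_inter_sub_mul_le_one (A B : Set Ω) :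
    |μ.real (A ∩ B) - μ.real A * μ.real B| ≤ 1 := by
  have hmul : μ.real A * μ.real B ≤ 1 :=
    mul_le_one₀ measureReal_le_one measureReal_nonneg measureReal_le_one
  have hnonneg : 0 ≤ μ.real A * μ.real B := by positivity
  rw [abs_le]
  constructor <;> linarith [measureReal_le_one (μ := μ) (s := A ∩ B),
    measureReal_nonneg (μ := μ) (s := A ∩ B)]

lemma alphaMix_le_one (h : ℕ) : alphaMix μ ξ h ≤ 1 := by
  refine Real.sSup_le ?_ zero_le_one
  rintro x ⟨t, A, B, -, -, rfl⟩
  exact abs_measureReal_inter_sub_mul_le_one A B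

lemma alphaMixingLE_alphaMix (t h : ℕ) :
    AlphaMixingLE μ (sigmaOf ξ (Set.Iic t)) (sigmaOf ξ (Set.Ici (t + h))) (alphaMix μ ξ h) := by
  intro A B hA hB
  refine le_csSup ⟨1, ?_⟩ ⟨t, A, B, hA, hB, rfl⟩
  rintro x ⟨t, A, B, -, -, rfl⟩
  exact abs_measureReal_inter_sub_mul_le_one A B

lemma alphaMix_le_mul_add_one_rpow {c φ : ℝ} (hφ : 0 ≤ φ)
    (hα : ∀ h : ℕ, 0 < h → alphaMix μ ξ h ≤ c * (h : ℝ) ^ (-φ)) (h : ℕ) :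
    alphaMix μ ξ h ≤ max 1 c * 2 ^ φ * ((h : ℝ) + 1) ^ (-φ) := by
  rcases h.eq_zero_or_pos with rfl | hh
  · calc alphaMix μ ξ 0 ≤ 1 := alphaMix_le_one 0
      _ ≤ max 1 c * 2 ^ φ := one_le_mul_of_one_le_of_one_le (le_max_left 1 c)
          (Real.one_le_rpow one_le_two hφ)
      _ = max 1 c * 2 ^ φ * ((0 : ℕ) + 1 : ℝ) ^ (-φ) := by simp
  · have hh1 : (1 : ℝ) ≤ h := by exact_mod_cast hh
    calc alphaMix μ ξ h ≤ c * (h : ℝ) ^ (-φ) := hα h hh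
      _ ≤ max 1 c * (((h : ℝ) + 1) / 2) ^ (-φ) := by
          refine mul_le_mul (le_max_right 1 c) ?_ (by positivity) (by positivity)
          exact Real.rpow_le_rpow_of_nonpos (by positivity) (by linarith) (neg_nonpos.2 hφ)
      _ = max 1 c * 2 ^ φ * ((h : ℝ) + 1) ^ (-φ) := by
          rw [Real.div_rpow (by positivity) zero_le_two, Real.rpow_neg zero_le_two, div_inv_eq_mul]
          ring

end AlphaMixCoefficient

section MixedMoment

variable {Ω ι : Type*} {m0 : MeasurableSpace Ω} {μ : Measure Ω} {ξ : ℕ → Ω → ℝ} [Fintype ι]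

/-- The mixed moment `E[∏ k, ξ (f k)]` of the process `ξ` at the tuple of times `f`. -/
noncomputable def mixedMoment (μ : Measure Ω) (ξ : ℕ → Ω → ℝ) (f : ι → ℕ) : ℝ :=
  ∫ ω, ∏ k, ξ (f k) ω ∂μ

lemma mixedMoment_eq_zero_of_unique [Unique ι] (hmean : ∀ t, ∫ ω, ξ t ω ∂μ = 0) (f : ι → ℕ) :
    mixedMoment μ ξ f = 0 := by
  simp only [mixedMoment, Fintype.prod_unique, hmean]

variable [DecidableEq ι]

theorem abs_mixedMoment_sub_mul_le_rpow [IsProbabilityMeasure μ] (hξ : ∀ t, Measurable (ξ t))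
    {δ C : ℝ} (hmom : ∀ t, AbsMomentLE μ (ξ t) δ C) (hδ : Fintype.card ι ≤ δ) {s : Finset ι}
    (hs : s.Nonempty) (hsc : sᶜ.Nonempty) {f : ι → ℕ} {t h : ℕ} (hbefore : ∀ k ∈ s, f k ≤ t)
    (hafter : ∀ k ∉ s, t + h ≤ f k) {a : ℝ} (ha : 0 < a) (ha1 : a ≤ 1)
    (hα : alphaMix μ ξ h ≤ a) :
    |mixedMoment μ ξ f - mixedMoment μ ξ (s.restrict f) * mixedMoment μ ξ (sᶜ.restrict f)| ≤
      (2 + C) ^ 2 * a ^ (1 - Fintype.card ι / δ) := by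
  have := hs.to_subtype
  have := hsc.to_subtype
  have hcard : (#s : ℝ) + #sᶜ = Fintype.card ι := by exact_mod_cast card_add_card_compl s
  have hs0 : (0 : ℝ) < #s := by exact_mod_cast hs.card_pos
  have hsc0 : (0 : ℝ) < #sᶜ := by exact_mod_cast hsc.card_pos
  have hδ0 : 0 < δ := by linarith
  have hexp : (δ / #s)⁻¹ + (δ / #sᶜ)⁻¹ = Fintype.card ι / δ := by
    rw [inv_div, inv_div, ← add_div, hcard]
  have hsplit : ∀ ω, ∏ k, ξ (f k) ω =
      (∏ k, ξ (s.restrict f k) ω) * ∏ k, ξ (sᶜ.restrict f k) ω := fun ω => by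
    rw [← prod_mul_prod_compl s fun k => ξ (f k) ω, ← prod_coe_sort s, ← prod_coe_sort sᶜ]
    rfl
  have hX := AbsMomentLE.prod (fun k => hξ (s.restrict f k)) fun k => hmom (s.restrict f k)
  have hY := AbsMomentLE.prod (fun k => hξ (sᶜ.restrict f k)) fun k => hmom (sᶜ.restrict f k)
  rw [Fintype.card_coe] at hX hY
  simp only [mixedMoment, hsplit, sq, ← hexp]
  refine ((alphaMixingLE_alphaMix t h).mono hα).abs_integral_mul_sub_le_rpow ha ha1
    (sigmaOf_le hξ _) (sigmaOf_le hξ _) ?_ ?_ (by positivity) (by positivity) ?_ hX hY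
  · exact Finset.measurable_prod _ fun k _ => measurable_sigmaOf (hbefore k k.2)
  · exact Finset.measurable_prod _ fun k _ => measurable_sigmaOf (hafter k (mem_compl.1 k.2))
  · rwa [hexp, div_le_one hδ0]

lemma sum_piFinset_restrict_mul_restrict_le {κ : Type*} (W : Finset κ) (s : Finset ι)
    {F : (s → κ) → ℝ} {G : (↥sᶜ → κ) → ℝ} (hF : ∀ x, 0 ≤ F x) (hG : ∀ y, 0 ≤ G y) :
    ∑ f ∈ Fintype.piFinset fun _ : ι => W, F (s.restrict f) * G (sᶜ.restrict f) ≤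
      (∑ x ∈ Fintype.piFinset fun _ => W, F x) * ∑ y ∈ Fintype.piFinset fun _ => W, G y := by
  classical
  have hinj : Function.Injective fun f : ι → κ => (s.restrict f, sᶜ.restrict f) := by
    intro f g hfg
    obtain ⟨hs, hsc⟩ := Prod.mk.inj hfg
    ext k
    by_cases hk : k ∈ s
    · exact congr_fun hs ⟨k, hk⟩
    · exact congr_fun hsc ⟨k, mem_compl.2 hk⟩
  rw [sum_mul_sum, ← sum_product',
    ← sum_image (f := fun x : (s → κ) × (↥sᶜ → κ) => F x.1 * G x.2) hinj.injOn]
  refine sum_le_sum_of_subset_of_nonneg (image_subset_iff.2 fun f hf => ?_)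
    fun x _ _ => mul_nonneg (hF _) (hG _)
  rw [Fintype.mem_piFinset] at hf
  exact mem_product.2 ⟨Fintype.mem_piFinset.2 fun k => hf k, Fintype.mem_piFinset.2 fun k => hf k⟩

end MixedMoment
section PolynomialMixing

variable {Ω ι : Type*} {m0 : MeasurableSpace Ω} {μ : Measure Ω} {ξ : ℕ → Ω → ℝ} {δ C φ c : ℝ}

/-- A centred process whose absolute moments of order `δ` are at most `C` and whose strong mixing
coefficients at lag `h` are at most `c * h ^ (-φ)`. -/
structure IsPolyMixing (μ : Measure Ω) (ξ : ℕ → Ω → ℝ) (δ C φ c : ℝ) : Prop where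
  measurable : ∀ t, Measurable (ξ t)
  integral_eq_zero : ∀ t, ∫ ω, ξ t ω ∂μ = 0
  absMomentLE : ∀ t, AbsMomentLE μ (ξ t) δ C
  alphaMix_le : ∀ h : ℕ, 0 < h → alphaMix μ ξ h ≤ c * (h : ℝ) ^ (-φ)

/-- The constant in the bound on the covariance of two products of variables of an `IsPolyMixing`
process. The factor `max 1 c * 2 ^ φ` lets `h + 1` replace `h` in the mixing rate, so that lag `0`
is covered as well. -/
noncomputable def covarianceConst (C φ c : ℝ) : ℝ :=
  (2 + C) ^ 2 * (max 1 c * 2 ^ φ)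

lemma covarianceConst_nonneg : 0 ≤ covarianceConst C φ c := by
  unfold covarianceConst
  positivity

lemma min_one_mul_rpow_rpow_le {K x γ γ' : ℝ} (hK : 1 ≤ K) (hx : 1 ≤ x) (hφ : 0 ≤ φ)
    (hγ' : 0 ≤ γ') (hγ : γ' ≤ γ) (hγ1 : γ ≤ 1) :
    min 1 (K * x ^ (-φ)) ^ γ ≤ K * x ^ (-(φ * γ')) := by
  have hγ0 : 0 ≤ γ := hγ'.trans hγ
  calc min 1 (K * x ^ (-φ)) ^ γ ≤ (K * x ^ (-φ)) ^ γ := by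
        gcongr
        exact min_le_right _ _
    _ = K ^ γ * x ^ (-(φ * γ)) := by
        rw [Real.mul_rpow (by positivity) (by positivity), ← Real.rpow_mul (by positivity),
          neg_mul]
    _ ≤ K * x ^ (-(φ * γ')) := by
        gcongr
        exact Real.rpow_le_self_of_one_le hK hγ1

variable [IsProbabilityMeasure μ] [Fintype ι] [DecidableEq ι]

lemma IsPolyMixing.abs_mixedMoment_sub_mul_le (hξ : IsPolyMixing μ ξ δ C φ c) (hφ : 0 ≤ φ) {R : ℝ}
    (hιR : Fintype.card ι ≤ R) (hR : R ≤ δ) {s : Finset ι} {i j : ι} (hi : i ∈ s) (hj : j ∉ s)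
    {f : ι → ℕ} (hij : f i ≤ f j) (hbefore : ∀ k ∈ s, f k ≤ f i) (hafter : ∀ k ∉ s, f j ≤ f k) :
    |mixedMoment μ ξ f - mixedMoment μ ξ (s.restrict f) * mixedMoment μ ξ (sᶜ.restrict f)| ≤
      covarianceConst C φ c * ((f j - f i : ℕ) + 1 : ℝ) ^ (-(φ * (1 - R / δ))) := by
  have : Nonempty ι := ⟨i⟩
  have hδ : 0 < δ := lt_of_lt_of_le (by positivity) (hιR.trans hR)
  have hK : 1 ≤ max 1 c * 2 ^ φ :=
    one_le_mul_of_one_le_of_one_le (le_max_left 1 c) (Real.one_le_rpow one_le_two hφ)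
  set a := min 1 (max 1 c * 2 ^ φ * ((f j - f i : ℕ) + 1 : ℝ) ^ (-φ))
  have hα : alphaMix μ ξ (f j - f i) ≤ a :=
    le_min (alphaMix_le_one _) (alphaMix_le_mul_add_one_rpow hφ hξ.alphaMix_le _)
  calc _ ≤ (2 + C) ^ 2 * a ^ (1 - Fintype.card ι / δ) :=
        abs_mixedMoment_sub_mul_le_rpow hξ.measurable hξ.absMomentLE (hιR.trans hR) ⟨i, hi⟩
          ⟨j, mem_compl.2 hj⟩ hbefore
          (fun k hk => (add_tsub_cancel_of_le hij).trans_le (hafter k hk)) (by positivity)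
          (min_le_left _ _) hα
    _ ≤ (2 + C) ^ 2 * (max 1 c * 2 ^ φ * ((f j - f i : ℕ) + 1 : ℝ) ^ (-(φ * (1 - R / δ)))) := by
        gcongr
        refine min_one_mul_rpow_rpow_le hK (by simp) hφ (sub_nonneg.2 ?_) (by gcongr) ?_
        · exact (div_le_one hδ).2 hR
        · exact sub_le_self _ (by positivity)
    _ = _ := (mul_assoc _ _ _).symm

/-- The subsets `s` of the index type for which both `s` and its complement are nonempty. -/
def properSplits (ι : Type*) [Fintype ι] [DecidableEq ι] : Finset (Finset ι) :=
  {s | s.Nonempty ∧ sᶜ.Nonempty}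

lemma IsPolyMixing.abs_mixedMoment_le_sum [Nontrivial ι] (hξ : IsPolyMixing μ ξ δ C φ c)
    (hφ : 0 ≤ φ) {R : ℝ} (hιR : Fintype.card ι ≤ R) (hR : R ≤ δ) {T : ℕ} {f : ι → ℕ}
    (hf : f ∈ Fintype.piFinset fun _ => range T) :
    |mixedMoment μ ξ f| ≤
      ∑ s ∈ properSplits ι, |mixedMoment μ ξ (s.restrict f)| * |mixedMoment μ ξ (sᶜ.restrict f)| +
      ∑ x ∈ univ.offDiag, if f ∈ gapTuples x.1 x.2 T then
        covarianceConst C φ c * ((f x.2 - f x.1 : ℕ) + 1 : ℝ) ^ (-(φ * (1 - R / δ))) else 0 := by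
  have hD : 0 ≤ covarianceConst C φ c := covarianceConst_nonneg
  obtain ⟨s, i, j, hi, hj, hij, hbefore, hafter, hspread⟩ := exists_split_at_largest_gap f
  have hcov := hξ.abs_mixedMoment_sub_mul_le hφ hιR hR hi hj hij hbefore hafter
  have htri := abs_sub_abs_le_abs_sub (mixedMoment μ ξ f)
    (mixedMoment μ ξ (s.restrict f) * mixedMoment μ ξ (sᶜ.restrict f))
  rw [abs_mul] at htri
  have hs : s ∈ properSplits ι := mem_filter.2 ⟨mem_univ s, ⟨i, hi⟩, ⟨j, mem_compl.2 hj⟩⟩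
  have hx : (i, j) ∈ (univ : Finset ι).offDiag :=
    mem_offDiag.2 ⟨mem_univ i, mem_univ j, ne_of_mem_of_not_mem hi hj⟩
  have hgap : f ∈ gapTuples i j T := mem_filter.2 ⟨hf, hij, hspread⟩
  have hsplits := single_le_sum
    (f := fun s => |mixedMoment μ ξ (s.restrict f)| * |mixedMoment μ ξ (sᶜ.restrict f)|)
    (fun s _ => by positivity) hs
  have hpairs := single_le_sum (f := fun x : ι × ι => if f ∈ gapTuples x.1 x.2 T then
      covarianceConst C φ c * ((f x.2 - f x.1 : ℕ) + 1 : ℝ) ^ (-(φ * (1 - R / δ))) else 0)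
    (fun x _ => by positivity) hx
  simp only [if_pos hgap] at hpairs
  linarith

lemma IsPolyMixing.sum_abs_mixedMoment_le_add [Nontrivial ι] (hξ : IsPolyMixing μ ξ δ C φ c)
    (hφ : 0 ≤ φ) {R : ℝ} (hιR : Fintype.card ι ≤ R) (hR : R ≤ δ) (T : ℕ) :
    ∑ f ∈ Fintype.piFinset fun _ : ι => range T, |mixedMoment μ ξ f| ≤
      ∑ s ∈ properSplits ι,
        (∑ g ∈ Fintype.piFinset fun _ : s => range T, |mixedMoment μ ξ g|) *
          ∑ g ∈ Fintype.piFinset fun _ : ↥sᶜ => range T, |mixedMoment μ ξ g| +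
      ∑ x ∈ (univ : Finset ι).offDiag, covarianceConst C φ c *
        ∑ f ∈ gapTuples x.1 x.2 T, ((f x.2 - f x.1 : ℕ) + 1 : ℝ) ^ (-(φ * (1 - R / δ))) := by
  refine (sum_le_sum fun f hf => hξ.abs_mixedMoment_le_sum hφ hιR hR hf).trans ?_
  rw [sum_add_distrib, sum_comm, sum_comm (t := (univ : Finset ι).offDiag)]
  refine add_le_add (sum_le_sum fun s _ => ?_) (sum_le_sum fun x _ => ?_)
  · exact sum_piFinset_restrict_mul_restrict_le (range T) s
      (F := fun g => |mixedMoment μ ξ g|) (G := fun g => |mixedMoment μ ξ g|)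
      (fun _ => abs_nonneg _) fun _ => abs_nonneg _
  · rw [← sum_filter, mul_sum]
    refine (sum_congr ?_ fun _ _ => rfl).le
    rw [filter_mem_eq_inter, inter_eq_right]
    exact filter_subset _ _

/-- The base of the geometric growth in `n` of the normalised sums of mixed moments of order
`n ≤ N`: there are at most `2 ^ N` splits of the index set, and the second summand bounds the
covariances between the two parts of all tuples. -/
noncomputable def momentGrowth (N : ℕ) (δ C φ c : ℝ) : ℝ :=
  2 ^ N + (2 * N) ^ N *
    (covarianceConst C φ c * ∑' h : ℕ, ((h : ℝ) + 1) ^ ((N : ℝ) / 2 - 1 - φ * (1 - N / δ)))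

lemma two_pow_le_momentGrowth (N : ℕ) : 2 ^ N ≤ momentGrowth N δ C φ c :=
  le_add_of_nonneg_right <| mul_nonneg (by positivity) <|
    mul_nonneg covarianceConst_nonneg (tsum_nonneg fun h => by positivity)

lemma sum_offDiag_gapTuples_le {N : ℕ} (hN : Fintype.card ι ≤ N) [Nontrivial ι]
    (hφ : (N : ℝ) / 2 < φ * (1 - N / δ)) (T : ℕ) :
    ∑ x ∈ (univ : Finset ι).offDiag, covarianceConst C φ c *
        ∑ f ∈ gapTuples x.1 x.2 T, ((f x.2 - f x.1 : ℕ) + 1 : ℝ) ^ (-(φ * (1 - N / δ))) ≤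
      (momentGrowth N δ C φ c - 2 ^ N) * (T : ℝ) ^ ((Fintype.card ι : ℝ) / 2) := by
  set n := Fintype.card ι
  set D := covarianceConst C φ c
  set Z := ∑' h : ℕ, ((h : ℝ) + 1) ^ ((N : ℝ) / 2 - 1 - φ * (1 - N / δ))
  have hD : 0 ≤ D := covarianceConst_nonneg
  have hZ : 0 ≤ Z := tsum_nonneg fun h => by positivity
  have hn : 2 ≤ n := Fintype.one_lt_card
  have hpairs : #(univ : Finset ι).offDiag ≤ (2 * n) ^ 2 := by
    rw [offDiag_card, card_univ, sq]
    exact (Nat.sub_le _ _).trans (by gcongr <;> omega)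
  have hcoeff : (#(univ : Finset ι).offDiag : ℝ) * (2 * n) ^ (n - 2) ≤ (2 * N) ^ N := by
    have : #(univ : Finset ι).offDiag * (2 * n) ^ (n - 2) ≤ (2 * N) ^ N := by
      calc _ ≤ (2 * n) ^ 2 * (2 * n) ^ (n - 2) := by gcongr
        _ = (2 * n) ^ n := by rw [← pow_add, Nat.add_sub_of_le hn]
        _ ≤ (2 * N) ^ n := by gcongr
        _ ≤ (2 * N) ^ N := Nat.pow_le_pow_right (by omega) hN
    exact_mod_cast this
  calc _ ≤ ∑ _x ∈ (univ : Finset ι).offDiag,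
        D * ((2 * n : ℝ) ^ (n - 2) * Z * (T : ℝ) ^ ((n : ℝ) / 2)) :=
        sum_le_sum fun x hx => mul_le_mul_of_nonneg_left
          (sum_gapTuples_rpow_le (mem_offDiag.1 hx).2.2 T (Nat.cast_le.2 hN) hφ) hD
    _ = #(univ : Finset ι).offDiag * (2 * n : ℝ) ^ (n - 2) * (D * Z) * (T : ℝ) ^ ((n : ℝ) / 2) := by
        rw [sum_const, nsmul_eq_mul]
        ring
    _ ≤ (2 * N) ^ N * (D * Z) * (T : ℝ) ^ ((n : ℝ) / 2) :=
        mul_le_mul_of_nonneg_right (mul_le_mul_of_nonneg_right hcoeff (mul_nonneg hD hZ))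
          (by positivity)
    _ = _ := by rw [momentGrowth, add_sub_cancel_left]

lemma pow_mul_rpow_mul_pow_mul_rpow {q x : ℝ} (hx : 0 ≤ x) {m n : ℕ} (hm : 0 < m) (hn : 0 < n) :
    q ^ (m - 1) * x ^ ((m : ℝ) / 2) * (q ^ (n - 1) * x ^ ((n : ℝ) / 2)) =
      q ^ (m + n - 2) * x ^ (((m + n : ℕ) : ℝ) / 2) := by
  rw [mul_mul_mul_comm, ← pow_add, ← Real.rpow_add_of_nonneg hx (by positivity) (by positivity),
    Nat.cast_add, add_div]
  congr 2
  omega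

lemma card_properSplits_le : #(properSplits ι) ≤ 2 ^ Fintype.card ι :=
  (card_le_univ _).trans_eq Fintype.card_finset

lemma IsPolyMixing.sum_abs_mixedMoment_le_of_splits [Nontrivial ι]
    (hξ : IsPolyMixing μ ξ δ C φ c) (hφ : 0 ≤ φ) {N : ℕ} (hN : N ≤ δ)
    (hφN : (N : ℝ) / 2 < φ * (1 - N / δ)) (hιN : Fintype.card ι ≤ N) {T : ℕ}
    (hsplits : ∀ s ∈ properSplits ι,
      (∑ g ∈ Fintype.piFinset fun _ : s => range T, |mixedMoment μ ξ g|) *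
          ∑ g ∈ Fintype.piFinset fun _ : ↥sᶜ => range T, |mixedMoment μ ξ g| ≤
        momentGrowth N δ C φ c ^ (Fintype.card ι - 2) * (T : ℝ) ^ ((Fintype.card ι : ℝ) / 2)) :
    ∑ f ∈ Fintype.piFinset fun _ : ι => range T, |mixedMoment μ ξ f| ≤
      momentGrowth N δ C φ c ^ (Fintype.card ι - 1) * (T : ℝ) ^ ((Fintype.card ι : ℝ) / 2) := by
  set Q := momentGrowth N δ C φ c
  set n := Fintype.card ι
  have hn : 2 ≤ n := Fintype.one_lt_card
  have hQN : 2 ^ N ≤ Q := two_pow_le_momentGrowth N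
  have hQ : 1 ≤ Q := (one_le_pow₀ one_le_two).trans hQN
  have hcount : (#(properSplits ι) : ℝ) ≤ 2 ^ N := by
    exact_mod_cast card_properSplits_le.trans (Nat.pow_le_pow_right two_pos hιN)
  refine (hξ.sum_abs_mixedMoment_le_add hφ (Nat.cast_le.2 hιN) hN T).trans ?_
  calc _ ≤ 2 ^ N * (Q ^ (n - 2) * (T : ℝ) ^ ((n : ℝ) / 2)) +
          (Q - 2 ^ N) * (Q ^ (n - 2) * (T : ℝ) ^ ((n : ℝ) / 2)) := by
        refine add_le_add ?_ ((sum_offDiag_gapTuples_le hιN hφN T).trans ?_)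
        · refine (sum_le_card_nsmul _ _ _ hsplits).trans ?_
          rw [nsmul_eq_mul]
          gcongr
        · refine mul_le_mul_of_nonneg_left ?_ (sub_nonneg.2 hQN)
          exact le_mul_of_one_le_left (by positivity) (one_le_pow₀ hQ)
    _ = Q ^ (n - 1) * (T : ℝ) ^ ((n : ℝ) / 2) := by
        rw [← add_mul, add_sub_cancel, ← mul_assoc, ← pow_succ',
          show n - 2 + 1 = n - 1 by omega]

theorem IsPolyMixing.sum_abs_mixedMoment_le [Nonempty ι] (hξ : IsPolyMixing μ ξ δ C φ c)
    (hφ : 0 ≤ φ) {N : ℕ} (hN : N ≤ δ) (hφN : (N : ℝ) / 2 < φ * (1 - N / δ))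
    (hιN : Fintype.card ι ≤ N) (T : ℕ) :
    ∑ f ∈ Fintype.piFinset fun _ : ι => range T, |mixedMoment μ ξ f| ≤
      momentGrowth N δ C φ c ^ (Fintype.card ι - 1) * (T : ℝ) ^ ((Fintype.card ι : ℝ) / 2) := by
  have hQ : 0 ≤ momentGrowth N δ C φ c := (by positivity : (0 : ℝ) ≤ 2 ^ N).trans
    (two_pow_le_momentGrowth N)
  induction hn : Fintype.card ι using Nat.strong_induction_on generalizing ι with | _ n ih
  subst hn
  rcases subsingleton_or_nontrivial ι with hsub | hnontrivial
  · obtain ⟨_⟩ := nonempty_unique ι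
    simp only [mixedMoment_eq_zero_of_unique hξ.integral_eq_zero, abs_zero, sum_const_zero]
    positivity
  refine hξ.sum_abs_mixedMoment_le_of_splits hφ hN hφN hιN fun s hs => ?_
  obtain ⟨hs, hsc⟩ := (mem_filter.1 hs).2
  have := hs.to_subtype
  have := hsc.to_subtype
  have hcard := card_add_card_compl s
  have hs0 := hs.card_pos
  have hsc0 := hsc.card_pos
  rw [← hcard, ← pow_mul_rpow_mul_pow_mul_rpow (Nat.cast_nonneg T) hs0 hsc0]
  gcongr
  · exact ih _ (by omega) (by rw [Fintype.card_coe]; omega) (Fintype.card_coe s)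
  · exact ih _ (by omega) (by rw [Fintype.card_coe]; omega) (Fintype.card_coe sᶜ)

end PolynomialMixing

section PartialSums

variable {Ω : Type*} {m0 : MeasurableSpace Ω} {μ : Measure Ω} [IsProbabilityMeasure μ]
  {ξ : ℕ → Ω → ℝ} {δ C φ c : ℝ}

lemma integrable_prod_of_absMomentLE {ι : Type*} [Fintype ι] [Nonempty ι] {X : ι → Ω → ℝ}
    (hX : ∀ k, Measurable (X k)) (hmom : ∀ k, AbsMomentLE μ (X k) δ C)
    (hδ : Fintype.card ι ≤ δ) : Integrable (fun ω => ∏ k, X k ω) μ :=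
  (AbsMomentLE.prod hX hmom).integrable (Finset.measurable_prod _ fun k _ => hX k)
    ((one_le_div₀ (by positivity)).2 hδ)

lemma IsPolyMixing.integrable_sum_pow (hξ : IsPolyMixing μ ξ δ C φ c) {n : ℕ} (hn : 0 < n)
    (hδ : n ≤ δ) (T : ℕ) : Integrable (fun ω => (∑ t ∈ range T, ξ t ω) ^ n) μ := by
  have := Fin.pos_iff_nonempty.1 hn
  simp only [sum_pow']
  exact integrable_finsetSum _ fun f _ => integrable_prod_of_absMomentLE
    (fun k => hξ.measurable (f k)) (fun k => hξ.absMomentLE (f k)) (by rwa [Fintype.card_fin])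

lemma IsPolyMixing.integral_sum_pow (hξ : IsPolyMixing μ ξ δ C φ c) {n : ℕ} (hn : 0 < n)
    (hδ : n ≤ δ) (T : ℕ) :
    ∫ ω, (∑ t ∈ range T, ξ t ω) ^ n ∂μ =
      ∑ f ∈ Fintype.piFinset fun _ : Fin n => range T, mixedMoment μ ξ f := by
  have := Fin.pos_iff_nonempty.1 hn
  simp only [sum_pow']
  exact integral_finsetSum _ fun f _ => integrable_prod_of_absMomentLE
    (fun k => hξ.measurable (f k)) (fun k => hξ.absMomentLE (f k)) (by rwa [Fintype.card_fin])

theorem IsPolyMixing.abs_integral_sum_pow_le (hξ : IsPolyMixing μ ξ δ C φ c) (hφ : 0 ≤ φ) {n : ℕ}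
    (hn : 0 < n) (hδ : n ≤ δ) (hφn : (n : ℝ) / 2 < φ * (1 - n / δ)) (T : ℕ) :
    |∫ ω, (∑ t ∈ range T, ξ t ω) ^ n ∂μ| ≤
      momentGrowth n δ C φ c ^ (n - 1) * (T : ℝ) ^ ((n : ℝ) / 2) := by
  have := Fin.pos_iff_nonempty.1 hn
  rw [hξ.integral_sum_pow hn hδ]
  refine (abs_sum_le_sum_abs _ _).trans ?_
  simpa only [Fintype.card_fin] using
    hξ.sum_abs_mixedMoment_le (ι := Fin n) hφ hδ hφn (Fintype.card_fin n).le T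

theorem IsPolyMixing.lintegral_normalized_sum_pow_le (hξ : IsPolyMixing μ ξ δ C φ c) (hφ : 0 ≤ φ)
    {n : ℕ} (hn : 0 < n) (heven : Even n) (hδ : n ≤ δ) (hφn : (n : ℝ) / 2 < φ * (1 - n / δ))
    {T : ℕ} (hT : 0 < T) :
    ∫⁻ ω, ENNReal.ofReal (((T : ℝ) ^ (-(1 / 2 : ℝ)) * ∑ t ∈ range T, ξ t ω) ^ n) ∂μ ≤
      ENNReal.ofReal (momentGrowth n δ C φ c ^ (n - 1)) := by
  have hscale : ((T : ℝ) ^ (-(1 / 2 : ℝ))) ^ n = ((T : ℝ) ^ ((n : ℝ) / 2))⁻¹ := by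
    rw [← Real.rpow_mul_natCast (Nat.cast_nonneg T), ← Real.rpow_neg (Nat.cast_nonneg T)]
    congr 1
    ring
  have hTpos : 0 < (T : ℝ) ^ ((n : ℝ) / 2) := by positivity
  rw [← ofReal_integral_eq_lintegral_ofReal _ (.of_forall fun ω => heven.pow_nonneg _)]
  · refine ENNReal.ofReal_le_ofReal ?_
    simp only [mul_pow, hscale, integral_const_mul]
    rw [inv_mul_le_iff₀ hTpos, mul_comm]
    exact (le_abs_self _).trans (hξ.abs_integral_sum_pow_le hφ hn hδ hφn T)
  · simp only [mul_pow]
    exact (hξ.integrable_sum_pow hn hδ T).const_mul _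

end PartialSums

/-- Moment bounds for strong mixing processes: for `2r < δ`,
`r/(1 − 2r/δ) < φ`, there is a constant `B` (depending only on `r, δ, φ, c, C`)
such that for every mean-zero process `ξ` with `sup_t E|ξ_t|^δ ≤ C` and mixing
coefficients `α(h) ≤ c h^{−φ}`, one has
`E[(T^{−1/2} Σ_{t<T} ξ_t)^{2r}] ≤ B` for every `T`. -/
theorem stmt_18 (r : ℕ) (hr : 0 < r) (δ φ c C : ℝ)
    (hδ : 2 * r < δ) (hφ : (r : ℝ) / (1 - 2 * r / δ) < φ) (hc : 0 ≤ c) (hC : 0 ≤ C) :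
    ∃ B : ℝ, ∀ (Ω : Type) [MeasurableSpace Ω] (μ : Measure Ω)
      [IsProbabilityMeasure μ] (ξ : ℕ → Ω → ℝ),
      (∀ t, Measurable (ξ t)) →
      (∀ t, ∫ ω, ξ t ω ∂μ = 0) →
      (∀ t, ∫⁻ ω, ENNReal.ofReal (|ξ t ω| ^ δ) ∂μ ≤ ENNReal.ofReal C) →
      (∀ h : ℕ, 0 < h → alphaMix μ ξ h ≤ c * (h : ℝ) ^ (-φ)) →
      ∀ T : ℕ, 0 < T →
        ∫⁻ ω, ENNReal.ofReal
            (((T : ℝ) ^ (-(1 / 2 : ℝ)) * ∑ t ∈ Finset.range T, ξ t ω) ^ (2 * r)) ∂μ ≤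
          ENNReal.ofReal B := by
  refine ⟨momentGrowth (2 * r) δ C φ c ^ (2 * r - 1),
    fun Ω _ μ _ ξ hmeas hmean hmom hmix T hT => ?_⟩
  have hξ : IsPolyMixing μ ξ δ C φ c :=
    ⟨hmeas, hmean, fun t => .of_lintegral_le (hmeas t) hC (hmom t), hmix⟩
  have hδ0 : 0 < δ := lt_of_le_of_lt (by positivity) hδ
  have hγ : 0 < 1 - 2 * r / δ := sub_pos.2 ((div_lt_one hδ0).2 hδ)
  have hφ0 : 0 ≤ φ := (by positivity : (0 : ℝ) ≤ r / (1 - 2 * r / δ)).trans hφ.le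
  refine hξ.lintegral_normalized_sum_pow_le hφ0 (by positivity) (even_two_mul r) ?_ ?_ hT
  · exact_mod_cast hδ.le
  · rw [div_lt_iff₀ hγ] at hφ
    simpa using hφ
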